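/- Let 1 ≤ d < r, let M be a representation of Γ_r and let U ∈ Gr_{d,r}. Then Hom(X_U, M) = 0 if and only if Soc_U(M) = M₂, i.e. if and only if the only m ∈ M₁ with x^M_u(m) = 0 for all u ∈ U is m = 0. -/

import Mathlib

open Module LinearMap

universe u

/-- A finite-dimensional representation of the `r`-Kronecker quiver `Γ_r` over `k`:
two finite-dimensional `k`-vector spaces `M₁`, `M₂` and `r` linear maps `M₁ → M₂`. -/
structure KRep (k : Type u) [Field k] (r : ℕ) : Type (u + 1) where
  V1 : Type u
  V2 : Type u
  [addV1 : AddCommGroup V1]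
  [addV2 : AddCommGroup V2]
  [modV1 : Module k V1]
  [modV2 : Module k V2]
  [finV1 : FiniteDimensional k V1]
  [finV2 : FiniteDimensional k V2]
  f : Fin r → V1 →ₗ[k] V2

attribute [instance] KRep.addV1 KRep.addV2 KRep.modV1 KRep.modV2 KRep.finV1 KRep.finV2

variable {k : Type u} [Field k] {r : ℕ}

/-- For `α ∈ k^r`, the operator `x^M_α = ∑ i, αᵢ • M(γᵢ) : M₁ → M₂`. -/
def KRep.x (M : KRep k r) (α : Fin r → k) : M.V1 →ₗ[k] M.V2 :=
  ∑ i, α i • M.f i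

/-- The space `Hom(M, N)` of morphisms of representations, as a `k`-submodule of the
pairs of linear maps `(f₁ : M₁ → N₁, f₂ : M₂ → N₂)`; membership is the condition
`f₂ ∘ M(γᵢ) = N(γᵢ) ∘ f₁` for all `i`. -/
def KHom (M N : KRep k r) : Submodule k ((M.V1 →ₗ[k] N.V1) × (M.V2 →ₗ[k] N.V2)) where
  carrier := {p | ∀ i, p.2 ∘ₗ M.f i = N.f i ∘ₗ p.1}
  add_mem' := by
    intro a b ha hb i
    simp only [Prod.snd_add, Prod.fst_add, LinearMap.add_comp, LinearMap.comp_add, ha i, hb i]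
  zero_mem' := by intro i; simp
  smul_mem' := by
    intro c a ha i
    simp only [Prod.smul_snd, Prod.smul_fst, LinearMap.smul_comp, LinearMap.comp_smul, ha i]

/-- The representation `X_U` attached to a subspace `U ⊆ k^r`:
`(X_U)₁ = k`, `(X_U)₂ = k^r/U`, and `X_U(γᵢ)(c) = c · (eᵢ + U)`. -/
def XU (U : Submodule k (Fin r → k)) : KRep k r where
  V1 := k
  V2 := (Fin r → k) ⧸ U
  f := fun i => LinearMap.toSpanSingleton k _ (Submodule.Quotient.mk (Pi.single i 1))

/-- The `M₁`-part of the socle: `{m ∈ M₁ : x^M_u(m) = 0 for all u ∈ U}`. -/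
def KRep.socKer (M : KRep k r) (U : Submodule k (Fin r → k)) : Submodule k M.V1 :=
  ⨅ u ∈ U, LinearMap.ker (M.x u)

/-- `Soc_U(M) = {m ∈ M₁ : x^M_u(m) = 0 ∀ u ∈ U} ⊕ M₂`, as a subspace of `M₁ ⊕ M₂`. -/
def KRep.soc (M : KRep k r) (U : Submodule k (Fin r → k)) : Submodule k (M.V1 × M.V2) :=
  (M.socKer U).prod ⊤

/-- `Rad_U(M) = ∑_{u ∈ U} x^M_u(M₁) ⊆ M₂`. -/
def KRep.rad (M : KRep k r) (U : Submodule k (Fin r → k)) : Submodule k M.V2 :=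
  ⨆ u ∈ U, LinearMap.range (M.x u)

/-- Direct sum of two representations. -/
def KRep.sum (M N : KRep k r) : KRep k r where
  V1 := M.V1 × N.V1
  V2 := M.V2 × N.V2
  f := fun i => (M.f i).prodMap (N.f i)

/-- Isomorphism of representations. -/
def KIso (M N : KRep k r) : Prop :=
  ∃ (e1 : M.V1 ≃ₗ[k] N.V1) (e2 : M.V2 ≃ₗ[k] N.V2),
    ∀ i, (e2 : M.V2 →ₗ[k] N.V2) ∘ₗ M.f i = N.f i ∘ₗ (e1 : M.V1 →ₗ[k] N.V1)

/-- A representation is nonzero if its dimension vector is not `(0,0)`. -/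
def KRep.Nonzero (M : KRep k r) : Prop :=
  finrank k M.V1 ≠ 0 ∨ finrank k M.V2 ≠ 0

/-- A representation is indecomposable if it is nonzero and not isomorphic to a direct
sum of two nonzero representations. -/
def KRep.Indecomposable (M : KRep k r) : Prop :=
  M.Nonzero ∧ ∀ A B : KRep k r, A.Nonzero → B.Nonzero → ¬ KIso M (A.sum B)

/-- A representation is simple if its dimension vector is `(1,0)` or `(0,1)`. -/
def KRep.IsSimple (M : KRep k r) : Prop :=
  (finrank k M.V1 = 1 ∧ finrank k M.V2 = 0) ∨ (finrank k M.V1 = 0 ∧ finrank k M.V2 = 1)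

/-- `M` has constant `d`-socle rank: `dim_k Soc_U(M)` is independent of `U ∈ Gr_{d,r}`. -/
def KRep.ConstSocRank (d : ℕ) (M : KRep k r) : Prop :=
  ∃ c : ℕ, ∀ U : Submodule k (Fin r → k), finrank k U = d → finrank k (M.soc U) = c

/-- `M` has the equal `d`-socle property: `Soc_U(M)` is independent of `U ∈ Gr_{d,r}`. -/
def KRep.ESP (d : ℕ) (M : KRep k r) : Prop :=
  ∀ U V : Submodule k (Fin r → k), finrank k U = d → finrank k V = d → M.soc U = M.soc V

/-- `M` has constant `d`-radical rank: `dim_k Rad_U(M)` is independent of `U ∈ Gr_{d,r}`. -/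
def KRep.ConstRadRank (d : ℕ) (M : KRep k r) : Prop :=
  ∃ c : ℕ, ∀ U : Submodule k (Fin r → k), finrank k U = d → finrank k (M.rad U) = c

/-- `M` has the equal `d`-radical property: `Rad_U(M)` is independent of `U ∈ Gr_{d,r}`. -/
def KRep.ERP (d : ℕ) (M : KRep k r) : Prop :=
  ∀ U V : Submodule k (Fin r → k), finrank k U = d → finrank k V = d → M.rad U = M.rad V

/-! A morphism `(g, h) : X_U → M` is determined by `m = g(1)`: since `g(c) = c • m`, commutation
with the arrows says that `h(eᵢ + U) = M(γᵢ)(m)` for all `i`, that is, `h(α + U) = x^M_α(m)` for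
all `α`. Such an `h` exists exactly when `α ↦ x^M_α(m)` vanishes on `U`. Hence evaluation at `1`
identifies `Hom(X_U, M)` with `{m ∈ M₁ : x^M_u(m) = 0 for all u ∈ U}`. -/

namespace KRep

variable (M : KRep k r) (U : Submodule k (Fin r → k))

/-- The structure map `(α, m) ↦ x^M_α(m)` of a representation as a bilinear map
`k^r → M₁ → M₂`, packaging the linear dependence of `KRep.x` on `α`. -/
def xBilin : (Fin r → k) →ₗ[k] M.V1 →ₗ[k] M.V2 :=
  Fintype.linearCombination k M.f

theorem xBilin_apply (α : Fin r → k) : M.xBilin α = M.x α := rfl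

theorem xBilin_single_one (i : Fin r) : M.xBilin (Pi.single i 1) = M.f i := by
  rw [xBilin, Fintype.linearCombination_apply_single, one_smul]

theorem mem_socKer_iff_le_ker (m : M.V1) : m ∈ M.socKer U ↔ U ≤ ker (M.xBilin.flip m) := by
  simp only [socKer, Submodule.mem_iInf, SetLike.le_def, mem_ker, flip_apply, xBilin_apply]

theorem soc_eq_prod_top_iff (N : Submodule k M.V1) : M.soc U = N.prod ⊤ ↔ M.socKer U = N := by
  refine ⟨fun h ↦ ?_, fun h ↦ by rw [soc, h]⟩
  simpa only [soc, Submodule.prod_map_fst] using congrArg (Submodule.map (fst k M.V1 M.V2)) h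

theorem mk_mem_kHom_XU_iff (g : k →ₗ[k] M.V1) (h : ((Fin r → k) ⧸ U) →ₗ[k] M.V2) :
    (g, h) ∈ KHom (XU U) M ↔ h ∘ₗ U.mkQ = M.xBilin.flip (g 1) :=
  calc (g, h) ∈ KHom (XU U) M
    _ ↔ ∀ i, h ∘ₗ toSpanSingleton k _ (U.mkQ (Pi.single i 1)) = M.f i ∘ₗ g := Iff.rfl
    _ ↔ ∀ i, h (U.mkQ (Pi.single i 1)) = M.xBilin (Pi.single i 1) (g 1) := by
      simp only [LinearMap.ext_ring_iff, comp_apply, toSpanSingleton_apply_one,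
        xBilin_single_one]
    _ ↔ h ∘ₗ U.mkQ = M.xBilin.flip (g 1) := by
      simp only [LinearMap.pi_ext'_iff, LinearMap.ext_ring_iff, comp_apply, single_apply,
        flip_apply]

theorem apply_one_mem_socKer_of_mk_mem_kHom {g : k →ₗ[k] M.V1}
    {h : ((Fin r → k) ⧸ U) →ₗ[k] M.V2} (hgh : (g, h) ∈ KHom (XU U) M) : g 1 ∈ M.socKer U := by
  rw [M.mem_socKer_iff_le_ker, ← (M.mk_mem_kHom_XU_iff U g h).1 hgh]
  calc U = ker U.mkQ := U.ker_mkQ.symm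
    _ ≤ ker (h ∘ₗ U.mkQ) := ker_le_ker_comp U.mkQ h

/-- Evaluation at `1` as an isomorphism `Hom(X_U, M) ≃ {m ∈ M₁ : x^M_u(m) = 0 for all u ∈ U}`;
its inverse sends `m` to the morphism with components `c ↦ c • m` and `α + U ↦ x^M_α(m)`. -/
def kHomXUEquivSocKer : KHom (XU U) M ≃ₗ[k] M.socKer U where
  toFun p := ⟨p.1.1 (1 : k), M.apply_one_mem_socKer_of_mk_mem_kHom U p.2⟩
  map_add' _ _ := rfl
  map_smul' _ _ := rfl
  invFun m := ⟨(toSpanSingleton k M.V1 m,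
    U.liftQ (M.xBilin.flip m) ((M.mem_socKer_iff_le_ker U m).1 m.2)),
      (M.mk_mem_kHom_XU_iff U _ _).2 (by rw [Submodule.liftQ_mkQ, toSpanSingleton_apply_one])⟩
  left_inv p := by
    have comp_mkQ := (M.mk_mem_kHom_XU_iff U p.1.1 p.1.2).1 p.2
    refine Subtype.ext (Prod.ext (LinearMap.ext_ring ?_) (Submodule.linearMap_qext U ?_))
    · exact toSpanSingleton_apply_one ..
    · exact (U.liftQ_mkQ _ _).trans comp_mkQ.symm
  right_inv m := Subtype.ext (toSpanSingleton_apply_one k M.V1 (m : M.V1))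

theorem kHom_XU_eq_bot_iff_socKer_eq_bot : KHom (XU U) M = ⊥ ↔ M.socKer U = ⊥ := by
  rw [← Submodule.subsingleton_iff_eq_bot, ← Submodule.subsingleton_iff_eq_bot]
  exact (M.kHomXUEquivSocKer U).toEquiv.subsingleton_congr

end KRep

/-- For `1 ≤ d < r`, a representation `M` of `Γ_r` and `U ∈ Gr_{d,r}`,
`Hom(X_U, M) = 0` if and only if `Soc_U(M) = M₂`, i.e. if and only if the only
`m ∈ M₁` with `x^M_u(m) = 0` for all `u ∈ U` is `m = 0`. -/
theorem hom_XU_eq_bot_iff (d : ℕ) (hd : 1 ≤ d) (hdr : d < r) (M : KRep k r)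
    (U : Submodule k (Fin r → k)) (hU : finrank k U = d) :
    (KHom (XU U) M = ⊥ ↔ M.soc U = (⊥ : Submodule k M.V1).prod ⊤) ∧
    (KHom (XU U) M = ⊥ ↔ M.socKer U = ⊥) := by
  refine ⟨?_, M.kHom_XU_eq_bot_iff_socKer_eq_bot U⟩
  rw [M.soc_eq_prod_top_iff, M.kHom_XU_eq_bot_iff_socKer_eq_bot]
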